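/- arXiv:2309.12611 — 3 statements merged into one kernel-verified Lean document; each statement's English description precedes it below -/
import Mathlib

section
/- Fix vehicle length l > 0, uncertainty parameter σₒ > 0 and speed v > 0. The per-time-step collision probability η ↦ p(v,η) := Φ((l − v·η)/(v·σₒ·√η)), where Φ is the standard Gaussian cumulative distribution function, is strictly decreasing in the headway η on (0, ∞). -/
open MeasureTheory Real Filter Set

/-- The standard Gaussian probability density function. -/
noncomputable def stdGaussianPDF (x : ℝ) : ℝ :=
  (Real.sqrt (2 * Real.pi))⁻¹ * Real.exp (-x ^ 2 / 2)

/-- The standard Gaussian cumulative distribution function Φ. -/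
noncomputable def stdGaussianCDF (x : ℝ) : ℝ :=
  ∫ t in Set.Iic x, stdGaussianPDF t

/-- The per-time-step collision probability p(v,η) = Φ((l − v·η)/(v·σₒ·√η)). -/
noncomputable def collisionProb (l σₒ v η : ℝ) : ℝ :=
  stdGaussianCDF ((l - v * η) / (v * σₒ * Real.sqrt η))

theorem strictMono_setIntegral_Iic {α : Type*} [LinearOrder α] [DenselyOrdered α]
    [TopologicalSpace α] [OrderClosedTopology α] [MeasurableSpace α] [OpensMeasurableSpace α]
    {μ : Measure α} [μ.IsOpenPosMeasure] {f : α → ℝ}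
    (hf : ∀ x, IntegrableOn f (Iic x) μ) (hpos : ∀ x, 0 < f x) :
    StrictMono fun x => ∫ t in Iic x, f t ∂μ := by
  intro a b hab
  have hIoc : IntegrableOn f (Ioc a b) μ := (hf b).mono_set Ioc_subset_Iic_self
  have hμ : 0 < μ (Ioc a b) :=
    (isOpen_Ioo.measure_pos μ (nonempty_Ioo.2 hab)).trans_le (measure_mono Ioo_subset_Ioc_self)
  have hsupport : Function.support f = univ :=
    Function.support_eq_univ fun x => (hpos x).ne'
  have hincrement : 0 < ∫ t in Ioc a b, f t ∂μ := by
    rwa [setIntegral_pos_iff_support_of_nonneg_ae (ae_of_all _ fun x => (hpos x).le) hIoc,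
      hsupport, univ_inter]
  calc ∫ t in Iic a, f t ∂μ
      < (∫ t in Iic a, f t ∂μ) + ∫ t in Ioc a b, f t ∂μ := lt_add_of_pos_right _ hincrement
    _ = ∫ t in Iic b, f t ∂μ := by
        rw [← setIntegral_union (Iic_disjoint_Ioc le_rfl) measurableSet_Ioc (hf a) hIoc,
          Iic_union_Ioc_eq_Iic hab.le]

theorem strictAntiOn_div_sub_mul {K : Type*} [Field K] [LinearOrder K] [IsStrictOrderedRing K]
    {a b : K} (ha : 0 ≤ a) (hb : 0 < b) : StrictAntiOn (fun x => a / x - b * x) (Ioi 0) := by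
  intro x hx y _ hxy
  have hdiv : a / y ≤ a / x := div_le_div_of_nonneg_left ha hx hxy.le
  have hmul : b * x < b * y := mul_lt_mul_of_pos_left hxy hb
  linarith

theorem stdGaussianPDF_eq_gaussianPDFReal :
    stdGaussianPDF = ProbabilityTheory.gaussianPDFReal 0 1 := by
  ext x
  simp only [stdGaussianPDF, ProbabilityTheory.gaussianPDFReal, NNReal.coe_one, mul_one, sub_zero]

theorem stdGaussianCDF_strictMono : StrictMono stdGaussianCDF := by
  unfold stdGaussianCDF
  rw [stdGaussianPDF_eq_gaussianPDFReal]
  exact strictMono_setIntegral_Iic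
    (fun _ => (ProbabilityTheory.integrable_gaussianPDFReal 0 1).integrableOn)
    fun x => ProbabilityTheory.gaussianPDFReal_pos 0 1 x one_ne_zero

/-- In `s = √η` the argument of `Φ` splits as `a / s - b * s`, so its monotonicity is that of two
monomials. For `η ≤ 0`, where `√η = 0`, both sides are the junk value `Φ 0`. -/
theorem collisionProb_eq_stdGaussianCDF_sqrt {l σₒ v η : ℝ} (hv : v ≠ 0) :
    collisionProb l σₒ v η = stdGaussianCDF (l / (v * σₒ) / √η - σₒ⁻¹ * √η) := by
  have hdiv : η / √η = √η := Real.div_sqrt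
  unfold collisionProb
  congr 1
  calc (l - v * η) / (v * σₒ * √η)
      = l / (v * σₒ) / √η - v / v * σₒ⁻¹ * (η / √η) := by ring
    _ = l / (v * σₒ) / √η - σₒ⁻¹ * √η := by rw [hdiv, div_self hv, one_mul]

/-- for fixed l > 0, σₒ > 0 and v > 0, the collision probability
η ↦ p(v,η) is strictly decreasing in the headway η on (0, ∞). -/
theorem collisionProb_strictAntiOn_headway (l σₒ v : ℝ)
    (hl : 0 < l) (hσ : 0 < σₒ) (hv : 0 < v) :
    StrictAntiOn (fun η => collisionProb l σₒ v η) (Set.Ioi 0) := by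
  have hanti : StrictAntiOn (fun s => l / (v * σₒ) / s - σₒ⁻¹ * s) (Ioi 0) :=
    strictAntiOn_div_sub_mul (by positivity) (inv_pos.2 hσ)
  intro η₁ hη₁ η₂ hη₂ hlt
  simp only [collisionProb_eq_stdGaussianCDF_sqrt hv.ne']
  exact stdGaussianCDF_strictMono <|
    hanti (Real.sqrt_pos.2 hη₁) (Real.sqrt_pos.2 hη₂) (Real.sqrt_lt_sqrt (le_of_lt hη₁) hlt)
end

section
/- Fix vehicle length l > 0, uncertainty parameter σₒ > 0 and speed v > 0. The map η ↦ p(v,η) = Φ((l − v·η)/(v·σₒ·√η)) is differentiable on (0,∞) with derivative dp/dη = −φ(z(η)) · (v·η + l)/(2·v·σₒ·η^{3/2}), where z(η) = (l − v·η)/(v·σₒ·√η) and φ is the standard Gaussian density; in particular this derivative is strictly negative. -/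
open MeasureTheory Real Filter Set

theorem hasDerivAt_integral_Iic {E : Type*} [NormedAddCommGroup E] [NormedSpace ℝ E]
    [CompleteSpace E] {f : ℝ → E} {x b : ℝ} (hf : IntegrableOn f (Iic b)) (hxb : x < b)
    (hfx : ContinuousAt f x) :
    HasDerivAt (fun y => ∫ t in Iic y, f t) (f x) x := by
  have integrableOn_of_le {y : ℝ} (hyb : y ≤ b) : IntegrableOn f (Iic y) :=
    hf.mono_set (Iic_subset_Iic.mpr hyb)
  have hf_bx : IntervalIntegrable f volume b x :=
    (hf.mono_set (uIcc_of_ge hxb.le ▸ Icc_subset_Iic_self)).intervalIntegrable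
  have hmeas : StronglyMeasurableAtFilter f (nhds x) :=
    ⟨Iic b, Iic_mem_nhds hxb, hf.aestronglyMeasurable⟩
  have hderiv : HasDerivAt (fun y => (∫ t in Iic b, f t) + ∫ t in b..y, f t) (f x) x :=
    (intervalIntegral.integral_hasDerivAt_right hf_bx hmeas hfx).const_add _
  refine hderiv.congr_of_eventuallyEq ?_
  filter_upwards [Iic_mem_nhds hxb] with y hyb
  rw [← intervalIntegral.integral_Iic_sub_Iic hf (integrableOn_of_le hyb), add_sub_cancel]

theorem stdGaussianPDF_pos (x : ℝ) : 0 < stdGaussianPDF x := by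
  rw [stdGaussianPDF_eq_gaussianPDFReal]
  exact ProbabilityTheory.gaussianPDFReal_pos 0 1 x one_ne_zero

theorem integrable_stdGaussianPDF : Integrable stdGaussianPDF := by
  rw [stdGaussianPDF_eq_gaussianPDFReal]
  exact ProbabilityTheory.integrable_gaussianPDFReal 0 1

theorem continuous_stdGaussianPDF : Continuous stdGaussianPDF := by
  unfold stdGaussianPDF
  fun_prop

theorem hasDerivAt_stdGaussianCDF (x : ℝ) : HasDerivAt stdGaussianCDF (stdGaussianPDF x) x :=
  hasDerivAt_integral_Iic integrable_stdGaussianPDF.integrableOn (lt_add_one x)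
    continuous_stdGaussianPDF.continuousAt

theorem rpow_three_halves_eq_mul_sqrt {x : ℝ} (hx : 0 ≤ x) : x ^ ((3 : ℝ) / 2) = x * √x := by
  rw [show (3 : ℝ) / 2 = 1 + 1 / 2 by norm_num, rpow_one_add' hx (by norm_num), sqrt_eq_rpow]

theorem hasDerivAt_sub_mul_div_mul_sqrt (a b : ℝ) {c x : ℝ} (hc : c ≠ 0) (hx : 0 < x) :
    HasDerivAt (fun y => (a - b * y) / (c * √y))
      (-((b * x + a) / (2 * c * x ^ ((3 : ℝ) / 2)))) x := by
  have hsqrt : √x ≠ 0 := (sqrt_pos.mpr hx).ne'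
  have hnum : HasDerivAt (fun y => a - b * y) (-b) x := by
    simpa using ((hasDerivAt_id x).const_mul b).const_sub a
  have hden : HasDerivAt (fun y => c * √y) (c * (1 / (2 * √x))) x :=
    (hasDerivAt_sqrt hx.ne').const_mul c
  refine (hnum.fun_div hden (mul_ne_zero hc hsqrt)).congr_deriv ?_
  calc
    (-b * (c * √x) - (a - b * x) * (c * (1 / (2 * √x)))) / (c * √x) ^ 2
        = -(2 * b * √x ^ 2 + (a - b * x)) / (2 * c * (√x ^ 2 * √x)) := by
      field_simp
      ring
    _ = -((b * x + a) / (2 * c * x ^ ((3 : ℝ) / 2))) := by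
      rw [sq_sqrt hx.le, rpow_three_halves_eq_mul_sqrt hx.le]
      ring

theorem hasDerivAt_collisionProb (l : ℝ) {σₒ v η : ℝ} (hσ : σₒ ≠ 0) (hv : v ≠ 0) (hη : 0 < η) :
    HasDerivAt (fun η => collisionProb l σₒ v η)
      (-(stdGaussianPDF ((l - v * η) / (v * σₒ * √η)) *
          (v * η + l) / (2 * v * σₒ * η ^ ((3 : ℝ) / 2)))) η := by
  have hz := hasDerivAt_sub_mul_div_mul_sqrt l v (mul_ne_zero hv hσ) hη
  refine ((hasDerivAt_stdGaussianCDF _).comp η hz).congr_deriv ?_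
  rw [← mul_assoc, mul_neg, mul_div_assoc]

theorem deriv_collisionProb_neg_iff (l : ℝ) {σₒ v η : ℝ} (hσ : σₒ ≠ 0) (hv : v ≠ 0)
    (hη : 0 < η) :
    deriv (fun η => collisionProb l σₒ v η) η < 0 ↔ 0 < v * σₒ * (v * η + l) := by
  rw [(hasDerivAt_collisionProb l hσ hv hη).deriv, neg_lt_zero]
  set p := stdGaussianPDF ((l - v * η) / (v * σₒ * √η))
  have hp : 0 < p := stdGaussianPDF_pos _
  have hscale : 0 < p / (2 * (v * σₒ) ^ 2 * η ^ ((3 : ℝ) / 2)) := by positivity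
  have hfactor : p * (v * η + l) / (2 * v * σₒ * η ^ ((3 : ℝ) / 2)) =
      p / (2 * (v * σₒ) ^ 2 * η ^ ((3 : ℝ) / 2)) * (v * σₒ * (v * η + l)) := by
    field_simp
  rw [hfactor, mul_pos_iff_of_pos_left hscale]

theorem collisionProb_hasDerivAt_headway_general (l : ℝ) {σₒ v : ℝ} (hσ : σₒ ≠ 0) (hv : v ≠ 0) :
    ∀ η ∈ Ioi (0 : ℝ),
      HasDerivAt (fun η => collisionProb l σₒ v η)
        (-(stdGaussianPDF ((l - v * η) / (v * σₒ * √η)) *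
            (v * η + l) / (2 * v * σₒ * η ^ ((3 : ℝ) / 2)))) η ∧
      (-(stdGaussianPDF ((l - v * η) / (v * σₒ * √η)) *
            (v * η + l) / (2 * v * σₒ * η ^ ((3 : ℝ) / 2))) < 0 ↔
        0 < v * σₒ * (v * η + l)) := by
  intro η hη
  have hderiv := hasDerivAt_collisionProb l hσ hv hη
  exact ⟨hderiv, hderiv.deriv ▸ deriv_collisionProb_neg_iff l hσ hv hη⟩

/-- η ↦ p(v,η) is differentiable on (0,∞) with derivative
dp/dη = −φ(z(η))·(v·η + l)/(2·v·σₒ·η^{3/2}), where z(η) = (l − v·η)/(v·σₒ·√η),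
and this derivative is strictly negative. -/
theorem collisionProb_hasDerivAt_headway (l σₒ v : ℝ)
    (hl : 0 < l) (hσ : 0 < σₒ) (hv : 0 < v) :
    ∀ η ∈ Set.Ioi (0 : ℝ),
      HasDerivAt (fun η => collisionProb l σₒ v η)
        (-(stdGaussianPDF ((l - v * η) / (v * σₒ * Real.sqrt η)) *
            (v * η + l) / (2 * v * σₒ * η ^ ((3 : ℝ) / 2)))) η ∧
      -(stdGaussianPDF ((l - v * η) / (v * σₒ * Real.sqrt η)) *
            (v * η + l) / (2 * v * σₒ * η ^ ((3 : ℝ) / 2))) < 0 := by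
  intro η (hη : 0 < η)
  exact (collisionProb_hasDerivAt_headway_general l hσ.ne' hv.ne' η hη).imp_right
    fun neg_iff => neg_iff.mpr (by positivity)
end

section
/- (Proposition 1) Fix vehicle length l > 0, uncertainty parameter σₒ > 0, positive constants T, L, τ, and a maximum allowable collision probability p̂ ∈ (0,1). For a speed v > 0 define the optimal constrained collision-inclusive capacity s*(v) as the maximum of s(v,η) over all headways η > 0 with p(v,η) ≤ p̂ (this maximum exists). Then s* is strictly increasing in v: for all 0 < v₁ < v₂, s*(v₁) < s*(v₂). -/
open MeasureTheory Real Filter Set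

/-- The collision-inclusive capacity s(v,η) = 1/(η + (T·L)/(τ·v)·p(v,η)). -/
noncomputable def cic (l σₒ T L τ v η : ℝ) : ℝ :=
  1 / (η + (T * L) / (τ * v) * collisionProb l σₒ v η)

open ProbabilityTheory
open scoped Topology

/-!
Capacity is the reciprocal of the effective headway `η + c / v * p(v, η)` with `c = T * L / τ`, so
maximizing the one is minimizing the other. The argument of `Φ` is `l / v / (σₒ * √η) - √η / σₒ`:
it tends to `∞` as `η → 0⁺`, which makes the set of headways with `p ≤ pmax` closed, and to `-∞` as
`η → ∞`, which makes that set nonempty. The effective headway is at least `η`, so it attains its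
minimum there. Since this argument decreases in `v`, the optimal headway at speed `v₁` remains
admissible at any `v₂ > v₁`, where it already has a strictly larger capacity.
-/

lemma isClosed_setOf_lt_and_le_of_eventually_lt {α β : Type*}
    [LinearOrder α] [TopologicalSpace α] [OrderTopology α] [NoMaxOrder α]
    [LinearOrder β] [TopologicalSpace β] [ClosedIicTopology β] {f : α → β} {a : α} {b : β}
    (hf : ContinuousOn f (Ioi a)) (hb : ∀ᶠ x in 𝓝[>] a, b < f x) :
    IsClosed {x | a < x ∧ f x ≤ b} := by
  obtain ⟨d, had, hd⟩ := mem_nhdsGT_iff_exists_Ioo_subset.1 hb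
  have hset : {x | a < x ∧ f x ≤ b} = Ici d ∩ f ⁻¹' Iic b := by
    ext x
    refine ⟨fun ⟨hax, hxb⟩ => ⟨?_, hxb⟩, fun ⟨hdx, hxb⟩ => ⟨lt_of_lt_of_le had hdx, hxb⟩⟩
    exact not_lt.1 fun hxd => (hd ⟨hax, hxd⟩).not_ge hxb
  rw [hset]
  exact (hf.mono (Ici_subset_Ioi.2 had)).preimage_isClosed_of_isClosed isClosed_Ici isClosed_Iic

lemma exists_isMinOn_of_bddBelow_of_tendsto_atTop {α β : Type*}
    [LinearOrder α] [TopologicalSpace α] [CompactIccSpace α]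
    [LinearOrder β] [TopologicalSpace β] [ClosedIicTopology β] {f : α → β} {s : Set α}
    (hs : IsClosed s) (hne : s.Nonempty) (hbdd : BddBelow s) (hf : ContinuousOn f s)
    (hlim : Tendsto f atTop atTop) : ∃ x ∈ s, IsMinOn f s x := by
  obtain ⟨x₀, hx₀⟩ := hne
  obtain ⟨m, hm⟩ := hbdd
  have : Nonempty α := ⟨x₀⟩
  obtain ⟨M, hM⟩ := (hlim.eventually_ge_atTop (f x₀)).exists_forall_of_atTop
  refine hf.exists_isMinOn' hs hx₀ (eventually_inf_principal.2 ?_)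
  filter_upwards [isCompact_Icc.compl_mem_cocompact (s := Icc m M)] with x hx hxs
  exact hM x (le_of_not_ge fun hxM => hx ⟨hm hxs, hxM⟩)

lemma cdf_pos (μ : Measure ℝ) [IsProbabilityMeasure μ] [μ.IsOpenPosMeasure] (x : ℝ) :
    0 < cdf μ x := by
  rw [cdf_eq_real]
  have hIic : 0 < μ (Iic x) := (μ.measure_Iio_pos x).trans_le (measure_mono Iio_subset_Iic_self)
  exact ENNReal.toReal_pos hIic.ne' (measure_ne_top μ _)

lemma continuous_cdf (μ : Measure ℝ) [IsProbabilityMeasure μ] [NullSingletonClass μ] :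
    Continuous (cdf μ) := by
  refine continuous_iff_continuousAt.2 fun x => ?_
  rw [(monotone_cdf μ).continuousAt_iff_leftLim_eq_rightLim, StieltjesFunction.rightLim_eq]
  have hjump : ENNReal.ofReal (cdf μ x - Function.leftLim (cdf μ) x) = 0 := by
    rw [← StieltjesFunction.measure_singleton, measure_cdf, measure_singleton]
  exact ((monotone_cdf μ).leftLim_le le_rfl).antisymm
    (sub_nonpos.1 (ENNReal.ofReal_eq_zero.1 hjump))

lemma stdGaussianCDF_eq_cdf : stdGaussianCDF = cdf (gaussianReal 0 1) := by
  have hpdf : stdGaussianPDF = gaussianPDFReal 0 1 := by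
    funext x
    simp [stdGaussianPDF, gaussianPDFReal]
  funext x
  rw [cdf_eq_real, measureReal_def, gaussianReal_apply_eq_integral 0 one_ne_zero,
    ENNReal.toReal_ofReal (integral_nonneg (gaussianPDFReal_nonneg 0 1)), stdGaussianCDF, hpdf]

lemma stdGaussianCDF_pos (x : ℝ) : 0 < stdGaussianCDF x := by
  have := (gaussianReal_absolutelyContinuous' 0 one_ne_zero).isOpenPosMeasure
  rw [stdGaussianCDF_eq_cdf]
  exact cdf_pos _ x

lemma monotone_stdGaussianCDF : Monotone stdGaussianCDF := by
  rw [stdGaussianCDF_eq_cdf]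
  exact monotone_cdf _

lemma continuous_stdGaussianCDF : Continuous stdGaussianCDF := by
  have := nullSingletonClass_gaussianReal (μ := 0) one_ne_zero
  rw [stdGaussianCDF_eq_cdf]
  exact continuous_cdf _

lemma tendsto_stdGaussianCDF_atBot : Tendsto stdGaussianCDF atBot (𝓝 0) := by
  rw [stdGaussianCDF_eq_cdf]
  exact tendsto_cdf_atBot _

lemma tendsto_stdGaussianCDF_atTop : Tendsto stdGaussianCDF atTop (𝓝 1) := by
  rw [stdGaussianCDF_eq_cdf]
  exact tendsto_cdf_atTop _

section CollisionProb

variable {l σₒ v η : ℝ}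

lemma collisionProb_pos : 0 < collisionProb l σₒ v η :=
  stdGaussianCDF_pos _

lemma collisionProb_eq (hv : v ≠ 0) :
    collisionProb l σₒ v η = stdGaussianCDF (l / v / (σₒ * √η) - √η / σₒ) := by
  have hdrift : v * η / (v * (σₒ * √η)) = √η / σₒ := by
    rw [mul_div_mul_left _ _ hv, mul_comm σₒ, ← div_div, Real.div_sqrt]
  rw [collisionProb, mul_assoc, sub_div, hdrift, ← div_div]

lemma collisionProb_antitoneOn_speed (hl : 0 ≤ l) (hσ : 0 ≤ σₒ) :
    AntitoneOn (fun v => collisionProb l σₒ v η) (Ioi 0) := by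
  intro v hv w hw hvw
  rw [mem_Ioi] at hv hw
  simp only [collisionProb_eq hv.ne', collisionProb_eq hw.ne']
  apply monotone_stdGaussianCDF
  gcongr

lemma continuousOn_collisionProb (hσ : σₒ ≠ 0) (hv : v ≠ 0) :
    ContinuousOn (collisionProb l σₒ v) (Ioi 0) := by
  refine continuous_stdGaussianCDF.comp_continuousOn (ContinuousOn.div ?_ ?_ fun η hη => ?_)
  · fun_prop
  · fun_prop
  · exact mul_ne_zero (mul_ne_zero hv hσ) (Real.sqrt_ne_zero'.2 hη)

lemma tendsto_collisionProb_atTop (hσ : 0 < σₒ) (hv : v ≠ 0) :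
    Tendsto (collisionProb l σₒ v) atTop (𝓝 0) := by
  have hgap : Tendsto (fun η => l / v / (σₒ * √η)) atTop (𝓝 0) :=
    (tendsto_sqrt_atTop.const_mul_atTop hσ).const_div_atTop _
  have hdrift : Tendsto (fun η => -(√η / σₒ)) atTop atBot :=
    tendsto_neg_atTop_atBot.comp (tendsto_sqrt_atTop.atTop_div_const hσ)
  refine (tendsto_stdGaussianCDF_atBot.comp (hgap.add_atBot hdrift)).congr fun η => ?_
  rw [collisionProb_eq hv, Function.comp_apply, sub_eq_add_neg]

lemma tendsto_collisionProb_nhdsGT_zero (hl : 0 < l) (hσ : 0 < σₒ) (hv : 0 < v) :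
    Tendsto (collisionProb l σₒ v) (𝓝[>] 0) (𝓝 1) := by
  have hsqrt : Tendsto Real.sqrt (𝓝[>] 0) (𝓝 0) :=
    (Real.continuous_sqrt.tendsto' 0 0 Real.sqrt_zero).mono_left nhdsWithin_le_nhds
  have hscale : Tendsto (fun η => σₒ * √η) (𝓝[>] 0) (𝓝[>] 0) := by
    refine tendsto_nhdsWithin_iff.2 ⟨by simpa using hsqrt.const_mul σₒ, ?_⟩
    filter_upwards [self_mem_nhdsWithin] with η hη
    exact mul_pos hσ (Real.sqrt_pos.2 hη)
  have hgap : Tendsto (fun η => l / v / (σₒ * √η)) (𝓝[>] 0) atTop :=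
    (tendsto_inv_nhdsGT_zero.comp hscale).const_mul_atTop (div_pos hl hv)
  have hdrift : Tendsto (fun η => -(√η / σₒ)) (𝓝[>] 0) (𝓝 (-(0 / σₒ))) :=
    (hsqrt.div_const σₒ).neg
  refine (tendsto_stdGaussianCDF_atTop.comp (hgap.atTop_add hdrift)).congr fun η => ?_
  rw [collisionProb_eq hv.ne', Function.comp_apply, sub_eq_add_neg]

end CollisionProb

/-- The headways admissible at speed `v`: those keeping the collision probability at most `pmax`. -/
def safeHeadways (l σₒ pmax v : ℝ) : Set ℝ :=
  {η | 0 < η ∧ collisionProb l σₒ v η ≤ pmax}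

section SafeHeadways

variable {l σₒ pmax v : ℝ}

lemma isClosed_safeHeadways (hl : 0 < l) (hσ : 0 < σₒ) (hv : 0 < v) (hp : pmax < 1) :
    IsClosed (safeHeadways l σₒ pmax v) :=
  isClosed_setOf_lt_and_le_of_eventually_lt (continuousOn_collisionProb hσ.ne' hv.ne')
    ((tendsto_collisionProb_nhdsGT_zero hl hσ hv).eventually_const_lt hp)

lemma safeHeadways_nonempty (hσ : 0 < σₒ) (hv : v ≠ 0) (hp : 0 < pmax) :
    (safeHeadways l σₒ pmax v).Nonempty :=
  ((eventually_gt_atTop 0).and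
    ((tendsto_collisionProb_atTop hσ hv).eventually_le_const hp)).exists

end SafeHeadways

/-- The headway plus the expected collision delay per vehicle, the reciprocal of the capacity `cic`.
The constant `c` stands for `T * L / τ`: a vehicle spends `L / (τ * v)` time steps on the segment,
and a collision in any of them costs the clearance time `T`. -/
noncomputable def effectiveHeadway (l σₒ c v η : ℝ) : ℝ :=
  η + c / v * collisionProb l σₒ v η

section EffectiveHeadway

variable {l σₒ c v η : ℝ}

lemma cic_eq_inv_effectiveHeadway {T L τ : ℝ} :
    cic l σₒ T L τ v η = (effectiveHeadway l σₒ (T * L / τ) v η)⁻¹ := by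
  rw [cic, effectiveHeadway, div_div, one_div]

lemma le_effectiveHeadway (hc : 0 ≤ c) (hv : 0 ≤ v) : η ≤ effectiveHeadway l σₒ c v η :=
  le_add_of_nonneg_right (mul_nonneg (div_nonneg hc hv) collisionProb_pos.le)

lemma effectiveHeadway_strictAntiOn_speed (hl : 0 ≤ l) (hσ : 0 ≤ σₒ) (hc : 0 < c) :
    StrictAntiOn (fun v => effectiveHeadway l σₒ c v η) (Ioi 0) := by
  intro v hv w hw hvw
  have hprob : collisionProb l σₒ w η ≤ collisionProb l σₒ v η :=
    collisionProb_antitoneOn_speed hl hσ hv hw hvw.le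
  have hweight : c / w < c / v := div_lt_div_of_pos_left hc hv hvw
  exact add_lt_add_right
    (mul_lt_mul hweight hprob collisionProb_pos (div_pos hc hv).le) η

lemma exists_isMinOn_effectiveHeadway {pmax : ℝ} (hl : 0 < l) (hσ : 0 < σₒ) (hc : 0 ≤ c)
    (hv : 0 < v) (hp : pmax ∈ Ioo 0 1) :
    ∃ η ∈ safeHeadways l σₒ pmax v,
      IsMinOn (effectiveHeadway l σₒ c v) (safeHeadways l σₒ pmax v) η := by
  have hcont : ContinuousOn (effectiveHeadway l σₒ c v) (Ioi 0) :=
    continuousOn_id.add (continuousOn_const.mul (continuousOn_collisionProb hσ.ne' hv.ne'))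
  exact exists_isMinOn_of_bddBelow_of_tendsto_atTop (isClosed_safeHeadways hl hσ hv hp.2)
    (safeHeadways_nonempty hσ hv.ne' hp.1) ⟨0, fun _ hη => hη.1.le⟩
    (hcont.mono fun _ hη => hη.1)
    (tendsto_atTop_mono (fun _ => le_effectiveHeadway hc hv.le) tendsto_id)

end EffectiveHeadway

section Capacity

variable {l σₒ T L τ : ℝ}

lemma cic_strictMonoOn_speed {η : ℝ} (hl : 0 ≤ l) (hσ : 0 ≤ σₒ) (hc : 0 < T * L / τ)
    (hη : 0 < η) : StrictMonoOn (fun v => cic l σₒ T L τ v η) (Ioi 0) := by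
  intro v hv w hw hvw
  simp only [cic_eq_inv_effectiveHeadway]
  exact inv_strictAnti₀ (hη.trans_le (le_effectiveHeadway hc.le (mem_Ioi.1 hw).le))
    (effectiveHeadway_strictAntiOn_speed hl hσ hc hv hw hvw)

lemma exists_isGreatest_cic {pmax v : ℝ} (hl : 0 < l) (hσ : 0 < σₒ) (hc : 0 ≤ T * L / τ)
    (hv : 0 < v) (hp : pmax ∈ Ioo 0 1) :
    ∃ η > 0, collisionProb l σₒ v η ≤ pmax ∧
      IsGreatest {y | ∃ η' > 0, collisionProb l σₒ v η' ≤ pmax ∧ y = cic l σₒ T L τ v η'}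
        (cic l σₒ T L τ v η) := by
  obtain ⟨η, ⟨hη, hsafe⟩, hmin⟩ := exists_isMinOn_effectiveHeadway hl hσ hc hv hp
  refine ⟨η, hη, hsafe, ⟨η, hη, hsafe, rfl⟩, ?_⟩
  rintro _ ⟨η', hη', hsafe', rfl⟩
  simp only [cic_eq_inv_effectiveHeadway]
  exact inv_anti₀ (hη.trans_le (le_effectiveHeadway hc hv.le)) (hmin ⟨hη', hsafe'⟩)

end Capacity

/-- Proposition 1: for each speed v > 0, the maximum of s(v,η)
over headways η > 0 with p(v,η) ≤ pmax exists, and this optimal constrained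
collision-inclusive capacity is strictly increasing in the speed v. -/
theorem optimal_constrained_cic_strictMono_speed (l σₒ T L τ pmax : ℝ)
    (hl : 0 < l) (hσ : 0 < σₒ) (hT : 0 < T) (hL : 0 < L) (hτ : 0 < τ)
    (hpmax : pmax ∈ Set.Ioo (0 : ℝ) 1) :
    (∀ v > (0 : ℝ), ∃ η > (0 : ℝ), collisionProb l σₒ v η ≤ pmax ∧
      IsGreatest {y : ℝ | ∃ η' > (0 : ℝ), collisionProb l σₒ v η' ≤ pmax ∧
        y = cic l σₒ T L τ v η'} (cic l σₒ T L τ v η)) ∧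
    (∀ v₁ v₂ : ℝ, 0 < v₁ → v₁ < v₂ →
      sSup {y : ℝ | ∃ η > (0 : ℝ), collisionProb l σₒ v₁ η ≤ pmax ∧
        y = cic l σₒ T L τ v₁ η} <
      sSup {y : ℝ | ∃ η > (0 : ℝ), collisionProb l σₒ v₂ η ≤ pmax ∧
        y = cic l σₒ T L τ v₂ η}) := by
  have hc : 0 < T * L / τ := by positivity
  refine ⟨fun v hv => exists_isGreatest_cic hl hσ hc.le hv hpmax, fun v₁ v₂ hv₁ hlt => ?_⟩
  have hv₂ : 0 < v₂ := hv₁.trans hlt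
  obtain ⟨η₁, hη₁, hsafe, hmax₁⟩ := exists_isGreatest_cic hl hσ hc.le hv₁ hpmax
  obtain ⟨η₂, -, -, hmax₂⟩ := exists_isGreatest_cic hl hσ hc.le hv₂ hpmax
  have hsafe₂ : collisionProb l σₒ v₂ η₁ ≤ pmax :=
    (collisionProb_antitoneOn_speed hl.le hσ.le hv₁ hv₂ hlt.le).trans hsafe
  rw [hmax₁.csSup_eq, hmax₂.csSup_eq]
  calc cic l σₒ T L τ v₁ η₁
      < cic l σₒ T L τ v₂ η₁ := cic_strictMonoOn_speed hl.le hσ.le hc hη₁ hv₁ hv₂ hlt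
    _ ≤ cic l σₒ T L τ v₂ η₂ := hmax₂.2 ⟨η₁, hη₁, hsafe₂, rfl⟩
end
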